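/- Let 0 < p ≤ 1, α > 0, and let {b_ε}_{ε>0} ⊆ L¹([−π/2, π/2]) satisfy b_ε(θ) = b_ε(|θ|) ≥ 0 and supp b_ε ⊂ {θ : 0 < c_ε ≤ |θ| ≤ d_ε} with d_ε → 0 as ε → 0. Let f₀ ≥ 0 be an even probability density on ℝ with lim_{ξ→0⁺} (1 − f̂₀(ξ))/ξ^{2/(p+1)} = α. Then the Fourier transforms f̂_ε of the unique solutions of the dissipative Kac equations ∂ₜ f̂_ε(ξ,t) = 2∫₀^{π/2} b_ε(θ)(f̂_ε(ξ cos^{p+1}θ, t) f̂_ε(ξ sin^{p+1}θ, t) − f̂_ε(ξ,t)) dθ with initial datum f̂₀ satisfy lim_{ξ→0⁺} (1 − f̂_ε(ξ,t))/ξ^{2/(p+1)} = α uniformly in ε and in t ≥ 0. -/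

import Mathlib

/-!
Put `s = 2 / (p + 1)`. Since `(cos θ ^ (p+1)) ^ s + (sin θ ^ (p+1)) ^ s = 1`, the profiles
`E_k(ξ) = exp (-k ξ ^ s)` satisfy `E_k(ξ cos^{p+1} θ) E_k(ξ sin^{p+1} θ) = E_k(ξ)`: they are
stationary solutions of the equation, whatever the kernel. Condition (A) says that
`E_{α+κ} ≤ f̂₀ ≤ E_{α-κ}` on some interval `[0, lam]`. The equation at the frequency `ξ` only
involves frequencies in `[0, ξ]`, and its gain term is monotone on nonnegative functions, so both
inequalities persist for all times on the same interval `[0, lam]`, which depends neither on the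
kernel nor on the time (`lower_barrier`, `upper_barrier`). Since `(1 - E_k(ξ)) / ξ ^ s → k` as
`ξ → 0⁺`, this gives the claim.

The persistence rests on a comparison principle (`nonneg_of_gain_bound`): a contraction argument
in the norm weighted by `exp (-(7 σ + 1) t)`, applied to the negative parts. It needs a bound on
the solution, which comes from conservation of mass (`mass_eq_one`), a consequence of Grönwall's
inequality at `ξ = 0`.
-/

open Real MeasureTheory Set Filter Topology

noncomputable section

/-- Fourier transform of an even real density: `f̂(ξ) = ∫ cos(ξv) f(v) dv`. -/
def ftEven (f : ℝ → ℝ) (ξ : ℝ) : ℝ := ∫ v : ℝ, Real.cos (ξ * v) * f v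

/-- Comparison principle. The family `w ξ`, `ξ ∈ I`, solves `w' = G - σ w`, where the gain `G` at
time `t` has negative part at most `4 σ` times that of `w` at time `t`. Each application of
Duhamel's formula halves the constant `B` in a bound `w ξ t ≥ -B exp ((7 σ + 1) t)`. -/
lemma nonneg_of_gain_bound (I : Set ℝ) (σ : ℝ) (hσ : 0 ≤ σ) (w G : ℝ → ℝ → ℝ)
    (hw : ∀ ξ ∈ I, ∀ t ∈ Ici (0 : ℝ), -2 ≤ w ξ t)
    (h0 : ∀ ξ ∈ I, 0 ≤ w ξ 0)
    (hG : ∀ t ∈ Ici (0 : ℝ), ∀ B ≥ (0 : ℝ), (∀ ξ ∈ I, -B ≤ w ξ t) →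
      ∀ ξ ∈ I, -(4 * σ * B) ≤ G ξ t)
    (hd : ∀ ξ ∈ I, ∀ t ∈ Ici (0 : ℝ),
      HasDerivWithinAt (w ξ) (G ξ t - σ * w ξ t) (Ici 0) t) :
    ∀ ξ ∈ I, ∀ t ∈ Ici (0 : ℝ), 0 ≤ w ξ t := by
  have key : ∀ n : ℕ, ∀ ξ ∈ I, ∀ t ∈ Ici (0 : ℝ),
      -(2 * (1 / 2) ^ n * exp ((7 * σ + 1) * t)) ≤ w ξ t := by
    intro n
    induction n with
    | zero =>
      intro ξ hξ t ht
      have h1 : 1 ≤ exp ((7 * σ + 1) * t) :=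
        one_le_exp (mul_nonneg (by positivity) ht)
      have := hw ξ hξ t ht
      simp only [pow_zero]
      linarith
    | succ n ih =>
      intro ξ hξ t ht
      set a : ℝ := (1 / 2) ^ n with ha
      have ha0 : 0 ≤ a := by positivity
      have hder : ∀ x ∈ Ici (0 : ℝ), HasDerivWithinAt
          (fun x => exp (σ * x) * w ξ x + a * exp ((8 * σ + 1) * x))
          (exp (σ * x) * (σ * 1) * w ξ x + exp (σ * x) * (G ξ x - σ * w ξ x)
            + a * (exp ((8 * σ + 1) * x) * ((8 * σ + 1) * 1))) (Ici 0) x := by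
        intro x hx
        refine HasDerivWithinAt.add (HasDerivWithinAt.mul ?_ (hd ξ hξ x hx)) ?_
        · exact (((hasDerivAt_id' x).const_mul σ).exp).hasDerivWithinAt
        · exact ((((hasDerivAt_id' x).const_mul (8 * σ + 1)).exp).const_mul a).hasDerivWithinAt
      have hmono : MonotoneOn
          (fun x => exp (σ * x) * w ξ x + a * exp ((8 * σ + 1) * x)) (Ici 0) := by
        refine monotoneOn_of_hasDerivWithinAt_nonneg (convex_Ici 0)
          (fun x hx => (hder x hx).continuousWithinAt)
          (fun x hx => (hder x (interior_subset hx)).mono interior_subset) ?_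
        intro x hx
        have hx' : x ∈ Ici (0 : ℝ) := interior_subset hx
        have h1 := hG x hx' (2 * a * exp ((7 * σ + 1) * x)) (by positivity)
          (fun ζ hζ => ih ζ hζ x hx') ξ hξ
        have h2 : exp ((8 * σ + 1) * x) = exp (σ * x) * exp ((7 * σ + 1) * x) := by
          rw [← exp_add]; ring_nf
        rw [h2]
        have h3 : 0 ≤ exp (σ * x) *
            (G ξ x + 4 * σ * (2 * a * exp ((7 * σ + 1) * x))) :=
          mul_nonneg (exp_pos _).le (by linarith)
        have h4 : 0 ≤ a * (exp (σ * x) * exp ((7 * σ + 1) * x)) := by positivity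
        nlinarith
      have h1 := hmono (self_mem_Ici (a := (0 : ℝ))) ht ht
      have h2 : exp ((8 * σ + 1) * t) = exp (σ * t) * exp ((7 * σ + 1) * t) := by
        rw [← exp_add]; ring_nf
      simp only [mul_zero, exp_zero, one_mul, mul_one, h2] at h1
      have h3 := h0 ξ hξ
      have h4 : 0 ≤ exp (σ * t) * (w ξ t + a * exp ((7 * σ + 1) * t)) := by
        nlinarith
      have h5 := nonneg_of_mul_nonneg_right h4 (exp_pos _)
      rw [pow_succ, ← ha]
      linarith
  intro ξ hξ t ht
  have hlim : Tendsto (fun n : ℕ => -(2 * (1 / 2 : ℝ) ^ n * exp ((7 * σ + 1) * t)))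
      atTop (𝓝 (-(2 * 0 * exp ((7 * σ + 1) * t)))) :=
    (((tendsto_pow_atTop_nhds_zero_of_lt_one (by norm_num) (by norm_num)).const_mul 2).mul_const
      _).neg
  have := le_of_tendsto' hlim (fun n => key n ξ hξ t ht)
  simpa using this

/-- The stationary profile `E_k(ξ) = exp (-k ξ ^ s)`, `s = 2 / (p + 1)`, for `ξ ≥ 0`. -/
def profile (p k ξ : ℝ) : ℝ := exp (-(k * ξ ^ (2 / (p + 1))))

lemma profile_nonneg (p k ξ : ℝ) : 0 ≤ profile p k ξ := (exp_pos _).le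

lemma profile_le_one {p k ξ : ℝ} (hk : 0 ≤ k) (hξ : 0 ≤ ξ) : profile p k ξ ≤ 1 := by
  have := rpow_nonneg hξ (2 / (p + 1))
  exact exp_le_one_iff.2 (by nlinarith)

lemma continuous_profile {p k : ℝ} (hp : 0 < p) : Continuous (profile p k) := by
  have h : Continuous fun ξ : ℝ => ξ ^ (2 / (p + 1)) :=
    continuous_id.rpow_const (fun _ => Or.inr (by positivity))
  unfold profile
  fun_prop

lemma scaled_rpow {p ξ x : ℝ} (hp : 0 < p) (hξ : 0 ≤ ξ) (hx : 0 ≤ x) :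
    (ξ * x ^ (p + 1)) ^ (2 / (p + 1)) = ξ ^ (2 / (p + 1)) * x ^ 2 := by
  rw [mul_rpow hξ (rpow_nonneg hx _), ← rpow_mul hx, mul_div_cancel₀ _ (by positivity)]
  norm_num

lemma profile_mul {p k ξ θ : ℝ} (hp : 0 < p) (hξ : 0 ≤ ξ) (hc : 0 ≤ cos θ) (hs : 0 ≤ sin θ) :
    profile p k (ξ * cos θ ^ (p + 1)) * profile p k (ξ * sin θ ^ (p + 1)) = profile p k ξ := by
  unfold profile
  rw [← exp_add, scaled_rpow hp hξ hc, scaled_rpow hp hξ hs]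
  congr 1
  linear_combination (-(k * ξ ^ (2 / (p + 1)))) * (sin_sq_add_cos_sq θ)

/-- Frequencies in `[0, lam]` are mapped into `[0, lam]` by the collision rescaling. -/
lemma scaled_mem {p lam ξ x : ℝ} (hp : 0 < p) (hξ : ξ ∈ Icc 0 lam) (hx : 0 ≤ x) (hx1 : x ≤ 1) :
    ξ * x ^ (p + 1) ∈ Icc 0 lam := by
  have h1 : x ^ (p + 1) ≤ 1 := rpow_le_one hx hx1 (by positivity)
  have h0 := rpow_nonneg hx (p + 1)
  exact ⟨mul_nonneg hξ.1 h0, (mul_le_of_le_one_right hξ.1 h1).trans hξ.2⟩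

lemma trig_bounds {θ : ℝ} (h : θ ∈ Icc 0 (π / 2)) :
    0 ≤ cos θ ∧ cos θ ≤ 1 ∧ 0 ≤ sin θ ∧ sin θ ≤ 1 :=
  ⟨cos_nonneg_of_mem_Icc ⟨by linarith [h.1, pi_pos], h.2⟩, cos_le_one θ,
    sin_nonneg_of_nonneg_of_le_pi h.1 (by linarith [h.2, pi_pos]), sin_le_one θ⟩

lemma continuous_collision {p : ℝ} (hp : 0 < p) {u v : ℝ → ℝ} (hu : Continuous u)
    (hv : Continuous v) (ξ : ℝ) :
    Continuous fun θ => u (ξ * cos θ ^ (p + 1)) * v (ξ * sin θ ^ (p + 1)) := by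
  have h1 : Continuous fun θ : ℝ => cos θ ^ (p + 1) :=
    continuous_cos.rpow_const (fun _ => Or.inr (by positivity))
  have h2 : Continuous fun θ : ℝ => sin θ ^ (p + 1) :=
    continuous_sin.rpow_const (fun _ => Or.inr (by positivity))
  fun_prop

/-- A solution `g ξ t` of the dissipative Kac equation in Fourier variables, for one kernel `β`:
continuous in the frequency, bounded by `1`, and satisfying the equation for `t ≥ 0`. -/
structure KacSolution (p : ℝ) (β : ℝ → ℝ) (g : ℝ → ℝ → ℝ) : Prop where
  ker_int : IntervalIntegrable β volume 0 (π / 2)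
  ker_nonneg : ∀ θ, 0 ≤ β θ
  cont : ∀ t ∈ Ici (0 : ℝ), Continuous fun ξ => g ξ t
  bound : ∀ t ∈ Ici (0 : ℝ), ∀ ξ, |g ξ t| ≤ 1
  eqn : ∀ ξ : ℝ, ∀ t ∈ Ici (0 : ℝ), HasDerivWithinAt (g ξ)
    (2 * ∫ θ in (0 : ℝ)..(π / 2), β θ *
      (g (ξ * cos θ ^ (p + 1)) t * g (ξ * sin θ ^ (p + 1)) t - g ξ t)) (Ici 0) t

/-- The difference between the gain terms of `g` and of `profile p k`. -/
def gainDiff (p k : ℝ) (β : ℝ → ℝ) (g : ℝ → ℝ → ℝ) (ξ t : ℝ) : ℝ :=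
  2 * ∫ θ in (0 : ℝ)..(π / 2), β θ *
    (g (ξ * cos θ ^ (p + 1)) t * g (ξ * sin θ ^ (p + 1)) t -
      profile p k (ξ * cos θ ^ (p + 1)) * profile p k (ξ * sin θ ^ (p + 1)))

section
variable {p k lam : ℝ} {β : ℝ → ℝ} {g : ℝ → ℝ → ℝ}

lemma KacSolution.rate_nonneg (h : KacSolution p β g) :
    0 ≤ 2 * ∫ θ in (0 : ℝ)..(π / 2), β θ :=
  mul_nonneg zero_le_two
    (intervalIntegral.integral_nonneg (by positivity) fun θ _ => h.ker_nonneg θ)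

lemma KacSolution.intervalIntegrable_gain (h : KacSolution p β g) (hp : 0 < p) (ξ : ℝ) {t : ℝ}
    (ht : t ∈ Ici (0 : ℝ)) : IntervalIntegrable (fun θ => β θ *
      (g (ξ * cos θ ^ (p + 1)) t * g (ξ * sin θ ^ (p + 1)) t -
        profile p k (ξ * cos θ ^ (p + 1)) * profile p k (ξ * sin θ ^ (p + 1))))
      volume 0 (π / 2) :=
  h.ker_int.mul_continuousOn ((continuous_collision hp (h.cont t ht) (h.cont t ht) ξ).sub
    (continuous_collision hp (continuous_profile hp) (continuous_profile hp) ξ)).continuousOn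

/-- The equation for `g - profile p k`, as `profile p k` is stationary. -/
lemma KacSolution.hasDeriv_sub (h : KacSolution p β g) (hp : 0 < p) {ξ : ℝ} (hξ : 0 ≤ ξ) {t : ℝ}
    (ht : t ∈ Ici (0 : ℝ)) :
    HasDerivWithinAt (fun s => g ξ s - profile p k ξ)
      (gainDiff p k β g ξ t -
        (2 * ∫ θ in (0 : ℝ)..(π / 2), β θ) * (g ξ t - profile p k ξ)) (Ici 0) t := by
  refine ((h.eqn ξ t ht).sub_const (profile p k ξ)).congr_deriv ?_
  unfold gainDiff
  rw [mul_assoc, ← intervalIntegral.integral_mul_const, ← mul_sub,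
    ← intervalIntegral.integral_sub (h.intervalIntegrable_gain hp ξ ht) (h.ker_int.mul_const _)]
  congr 1
  refine intervalIntegral.integral_congr fun θ hθ => ?_
  rw [uIcc_of_le (by positivity)] at hθ
  obtain ⟨hc, -, hs, -⟩ := trig_bounds hθ
  simp only [profile_mul hp hξ hc hs]
  ring

lemma KacSolution.lower_barrier (h : KacSolution p β g) (hp : 0 < p) (hk : 0 ≤ k)
    (h0 : ∀ ξ ∈ Icc 0 lam, profile p k ξ ≤ g ξ 0) :
    ∀ ξ ∈ Icc 0 lam, ∀ t ∈ Ici (0 : ℝ), profile p k ξ ≤ g ξ t := by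
  intro ξ hξ t ht
  refine sub_nonneg.1 (nonneg_of_gain_bound (Icc 0 lam) _ h.rate_nonneg
    (fun ξ t => g ξ t - profile p k ξ) (gainDiff p k β g) ?_
    (fun ξ hξ => sub_nonneg.2 (h0 ξ hξ)) ?_ (fun ξ hξ t ht => h.hasDeriv_sub hp hξ.1 ht) ξ hξ t ht)
  · intro ξ hξ t ht
    have := abs_le.1 (h.bound t ht ξ)
    have := profile_le_one (p := p) hk hξ.1
    linarith
  · intro t ht B hB hw ξ hξ
    have hmono : ∫ θ in (0 : ℝ)..(π / 2), β θ * (-(4 * B)) ≤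
        ∫ θ in (0 : ℝ)..(π / 2), β θ *
          (g (ξ * cos θ ^ (p + 1)) t * g (ξ * sin θ ^ (p + 1)) t -
            profile p k (ξ * cos θ ^ (p + 1)) * profile p k (ξ * sin θ ^ (p + 1))) := by
      refine intervalIntegral.integral_mono_on (by positivity) (h.ker_int.mul_const _)
        (h.intervalIntegrable_gain hp ξ ht) fun θ hθ => ?_
      obtain ⟨hc, hc1, hs, hs1⟩ := trig_bounds hθ
      refine mul_le_mul_of_nonneg_left ?_ (h.ker_nonneg θ)
      have mC := scaled_mem hp hξ hc hc1
      have mS := scaled_mem hp hξ hs hs1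
      have wC := hw _ mC
      have wS := hw _ mS
      have gC := abs_le.1 (h.bound t ht (ξ * cos θ ^ (p + 1)))
      have gS := abs_le.1 (h.bound t ht (ξ * sin θ ^ (p + 1)))
      have eC := profile_le_one (p := p) hk mC.1
      have eS := profile_le_one (p := p) hk mS.1
      have eC0 := profile_nonneg p k (ξ * cos θ ^ (p + 1))
      have eS0 := profile_nonneg p k (ξ * sin θ ^ (p + 1))
      generalize g (ξ * cos θ ^ (p + 1)) t = x at *
      generalize g (ξ * sin θ ^ (p + 1)) t = y at *
      generalize profile p k (ξ * cos θ ^ (p + 1)) = e at *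
      generalize profile p k (ξ * sin θ ^ (p + 1)) = f at *
      -- `x y - e f = (x - e) y + e (y - f)`, and the first term needs care only for `y < 0`,
      -- where `-y ≤ f - y ≤ B`
      have hB2 : -B ≤ e * (y - f) := by nlinarith
      rcases le_total 0 y with hy | hy
      · have : -B ≤ (x - e) * y := by nlinarith
        nlinarith
      · have : -(2 * B) ≤ (x - e) * y := by
          rcases le_total 0 (x - e) with hx | hx <;> nlinarith
        nlinarith
    rw [intervalIntegral.integral_mul_const] at hmono
    unfold gainDiff
    linarith

lemma KacSolution.upper_barrier (h : KacSolution p β g) (hp : 0 < p) (hk : 0 ≤ k)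
    (hg : ∀ ξ ∈ Icc 0 lam, ∀ t ∈ Ici (0 : ℝ), 0 ≤ g ξ t)
    (h0 : ∀ ξ ∈ Icc 0 lam, g ξ 0 ≤ profile p k ξ) :
    ∀ ξ ∈ Icc 0 lam, ∀ t ∈ Ici (0 : ℝ), g ξ t ≤ profile p k ξ := by
  intro ξ hξ t ht
  refine sub_nonneg.1 (nonneg_of_gain_bound (Icc 0 lam) _ h.rate_nonneg
    (fun ξ t => profile p k ξ - g ξ t) (fun ξ t => -gainDiff p k β g ξ t) ?_
    (fun ξ hξ => sub_nonneg.2 (h0 ξ hξ)) ?_ (fun ξ hξ t ht => ?_) ξ hξ t ht)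
  · intro ξ hξ t ht
    have := abs_le.1 (h.bound t ht ξ)
    have := profile_nonneg p k ξ
    linarith
  · intro t ht B hB hw ξ hξ
    have hmono : ∫ θ in (0 : ℝ)..(π / 2), β θ *
          (g (ξ * cos θ ^ (p + 1)) t * g (ξ * sin θ ^ (p + 1)) t -
            profile p k (ξ * cos θ ^ (p + 1)) * profile p k (ξ * sin θ ^ (p + 1))) ≤
        ∫ θ in (0 : ℝ)..(π / 2), β θ * (4 * B) := by
      refine intervalIntegral.integral_mono_on (by positivity)
        (h.intervalIntegrable_gain hp ξ ht) (h.ker_int.mul_const _) fun θ hθ => ?_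
      obtain ⟨hc, hc1, hs, hs1⟩ := trig_bounds hθ
      refine mul_le_mul_of_nonneg_left ?_ (h.ker_nonneg θ)
      have mC := scaled_mem hp hξ hc hc1
      have mS := scaled_mem hp hξ hs hs1
      have wC := hw _ mC
      have wS := hw _ mS
      have gS := abs_le.1 (h.bound t ht (ξ * sin θ ^ (p + 1)))
      have gS0 := hg _ mS t ht
      have eC := profile_le_one (p := p) hk mC.1
      have eC0 := profile_nonneg p k (ξ * cos θ ^ (p + 1))
      generalize g (ξ * cos θ ^ (p + 1)) t = x at *
      generalize g (ξ * sin θ ^ (p + 1)) t = y at *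
      generalize profile p k (ξ * cos θ ^ (p + 1)) = e at *
      generalize profile p k (ξ * sin θ ^ (p + 1)) = f at *
      have h1 : e * (y - f) ≤ B := by nlinarith
      have h2 : (x - e) * y ≤ B := by nlinarith
      nlinarith
    rw [intervalIntegral.integral_mul_const] at hmono
    unfold gainDiff
    linarith
  · simpa only [neg_sub, neg_sub', mul_sub, sub_neg_eq_add] using
      (h.hasDeriv_sub (k := k) hp hξ.1 ht).fun_neg.congr_deriv (g' := -gainDiff p k β g ξ t -
        (2 * ∫ θ in (0 : ℝ)..(π / 2), β θ) * (profile p k ξ - g ξ t)) (by ring)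

end

lemma integrable_cos_mul {f : ℝ → ℝ} (hf : Integrable f) (ξ : ℝ) :
    Integrable fun v => cos (ξ * v) * f v :=
  hf.bdd_mul (c := 1) (by fun_prop) (ae_of_all _ fun v => by simpa using abs_cos_le_one (ξ * v))

lemma continuous_ftEven {f : ℝ → ℝ} (hf : Integrable f) : Continuous (ftEven f) := by
  unfold ftEven
  refine continuous_of_dominated (bound := fun v => ‖f v‖)
    (fun ξ => (integrable_cos_mul hf ξ).aestronglyMeasurable) (fun ξ => ae_of_all _ fun v => ?_)
    hf.norm (ae_of_all _ fun v => by fun_prop)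
  rw [norm_mul]
  exact mul_le_of_le_one_left (norm_nonneg _) (abs_cos_le_one _)

lemma abs_ftEven_le {f : ℝ → ℝ} (hf : Integrable f) (hf0 : ∀ v, 0 ≤ f v) (ξ : ℝ) :
    |ftEven f ξ| ≤ ftEven f 0 := by
  unfold ftEven
  refine (norm_integral_le_integral_norm _).trans
    (integral_mono (integrable_cos_mul hf ξ).norm (integrable_cos_mul hf 0) fun v => ?_)
  simp only [norm_mul, zero_mul, cos_zero, one_mul, norm_eq_abs, abs_of_nonneg (hf0 v)]
  exact mul_le_of_le_one_left (hf0 v) (abs_cos_le_one _)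

/-- Uniqueness for `M' = σ (M ² - M)`, `M 0 = 1`: conservation of mass. -/
lemma mass_eq_one {M : ℝ → ℝ} {σ : ℝ} (h0 : M 0 = 1)
    (hd : ∀ t ∈ Ici (0 : ℝ), HasDerivWithinAt M (σ * (M t * M t - M t)) (Ici 0) t) :
    ∀ t ∈ Ici (0 : ℝ), M t = 1 := by
  intro T hT
  have hcont : ContinuousOn M (Icc 0 T) := fun t ht =>
    ((hd t ht.1).continuousWithinAt).mono Icc_subset_Ici_self
  obtain ⟨C, hC⟩ := isCompact_Icc.exists_bound_of_continuousOn hcont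
  have key := norm_le_gronwallBound_of_norm_deriv_right_le (f := fun t => M t - 1)
    (f' := fun t => σ * (M t * M t - M t)) (δ := 0) (K := |σ| * C) (ε := 0) (a := 0) (b := T)
    (hcont.sub continuousOn_const)
    (fun t ht => ((hd t ht.1).mono (Ici_subset_Ici.2 ht.1)).sub_const 1)
    (by simp [h0]) (fun t ht => ?_) T ⟨hT, le_rfl⟩
  · rw [gronwallBound_ε0_δ0] at key
    exact sub_eq_zero.1 (norm_le_zero_iff.1 key)
  · have h1 := hC t (Ico_subset_Icc_self ht)
    rw [show σ * (M t * M t - M t) = σ * M t * (M t - 1) by ring, norm_mul, norm_mul, add_zero]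
    exact mul_le_mul_of_nonneg_right (mul_le_mul_of_nonneg_left h1 (abs_nonneg _)) (norm_nonneg _)

lemma tendsto_one_sub_profile_div {p : ℝ} (hp : 0 < p) (k : ℝ) :
    Tendsto (fun ξ => (1 - profile p k ξ) / ξ ^ (2 / (p + 1))) (𝓝[>] 0) (𝓝 k) := by
  have hpow : Tendsto (fun ξ : ℝ => ξ ^ (2 / (p + 1))) (𝓝[>] 0) (𝓝[≠] 0) := by
    refine tendsto_nhdsWithin_iff.2 ⟨?_, ?_⟩
    · have h : Continuous fun ξ : ℝ => ξ ^ (2 / (p + 1)) :=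
        continuous_id.rpow_const (fun _ => Or.inr (by positivity))
      have := (h.tendsto 0).mono_left (nhdsWithin_le_nhds (s := Ioi 0))
      rwa [zero_rpow (by positivity)] at this
    · filter_upwards [self_mem_nhdsWithin] with ξ hξ
      exact (rpow_pos_of_pos hξ _).ne'
  have hd : HasDerivAt (fun x : ℝ => -exp (-(k * x))) k 0 := by
    exact (((hasDerivAt_id' (0 : ℝ)).const_mul k).fun_neg.exp).fun_neg.congr_deriv (by simp)
  refine ((hasDerivAt_iff_tendsto_slope.1 hd).comp hpow).congr fun ξ => ?_
  simp [slope_def_field, profile]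
  ring

/-- Uniform propagation of the small-frequency behaviour
`(1 - f̂₀(ξ))/ξ^{2/(p+1)} → α` along the solutions of the dissipative Kac
equations, uniformly in `ε` and in `t ≥ 0`. -/
theorem propagation_condition_A
    (p α : ℝ) (hp : 0 < p) (hp1 : p ≤ 1) (hα : 0 < α)
    -- the collision kernels b_ε
    (b : ℝ → ℝ → ℝ) (c d : ℝ → ℝ)
    (hb_int : ∀ ε > (0 : ℝ), IntegrableOn (b ε) (Icc (-(π / 2)) (π / 2)))
    (hb_even : ∀ ε > (0 : ℝ), ∀ θ, b ε θ = b ε |θ|)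
    (hb_nonneg : ∀ ε > (0 : ℝ), ∀ θ, 0 ≤ b ε θ)
    (hc_pos : ∀ ε > (0 : ℝ), 0 < c ε)
    (hsupp : ∀ ε > (0 : ℝ), ∀ θ, b ε θ ≠ 0 → c ε ≤ |θ| ∧ |θ| ≤ d ε)
    (hd_lim : Tendsto d (𝓝[>] 0) (𝓝 0))
    -- the even initial probability density f₀
    (f₀ : ℝ → ℝ) (hf₀_nonneg : ∀ v, 0 ≤ f₀ v) (hf₀_int : Integrable f₀)
    (hf₀_mass : ∫ v, f₀ v = 1) (hf₀_even : ∀ v, f₀ (-v) = f₀ v)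
    -- condition (A)
    (hA : Tendsto (fun ξ => (1 - ftEven f₀ ξ) / ξ ^ (2 / (p + 1)))
      (𝓝[>] 0) (𝓝 α))
    -- the solutions f_ε of the dissipative Kac equations with initial datum f₀
    (fε : ℝ → ℝ → ℝ → ℝ)
    (hfε_nonneg : ∀ ε > (0 : ℝ), ∀ v, ∀ t ∈ Ici (0 : ℝ), 0 ≤ fε ε v t)
    (hfε_int : ∀ ε > (0 : ℝ), ∀ t ∈ Ici (0 : ℝ), Integrable (fun v => fε ε v t))
    (hfε_init : ∀ ε > (0 : ℝ), ∀ v, fε ε v 0 = f₀ v)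
    (hfε_eq : ∀ ε > (0 : ℝ), ∀ ξ : ℝ, ∀ t ∈ Ici (0 : ℝ),
      HasDerivWithinAt (fun s => ftEven (fun v => fε ε v s) ξ)
        (2 * ∫ θ in (0 : ℝ)..(π / 2), b ε θ *
          (ftEven (fun v => fε ε v t) (ξ * Real.cos θ ^ (p + 1)) *
            ftEven (fun v => fε ε v t) (ξ * Real.sin θ ^ (p + 1)) -
            ftEven (fun v => fε ε v t) ξ))
        (Ici 0) t) :
    -- conclusion: (1 - f̂_ε(ξ,t))/ξ^{2/(p+1)} → α as ξ → 0⁺, uniformly in ε, t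
    ∀ η > (0 : ℝ), ∃ lam > (0 : ℝ), ∀ ε > (0 : ℝ), ∀ t ∈ Ici (0 : ℝ),
      ∀ ξ : ℝ, 0 < ξ → ξ < lam →
        |(1 - ftEven (fun v => fε ε v t) ξ) / ξ ^ (2 / (p + 1)) - α| < η := by
  intro η hη
  have hp1' : (0 : ℝ) < p + 1 := by positivity
  -- `κ ≤ α` keeps both barriers bounded by `1`
  set κ : ℝ := min (η / 2) α with hκ
  have hκ0 : 0 < κ := lt_min (by positivity) hα
  have hκη : κ < η := (min_le_left _ _).trans_lt (by linarith)
  have hκα : κ ≤ α := min_le_right _ _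
  have hlo := tendsto_one_sub_profile_div hp (α + κ)
  have hup := tendsto_one_sub_profile_div hp (α - κ)
  have hev : ∀ᶠ ξ in 𝓝[>] (0 : ℝ),
      profile p (α + κ) ξ ≤ ftEven f₀ ξ ∧ ftEven f₀ ξ ≤ profile p (α - κ) ξ ∧
      (1 - profile p (α + κ) ξ) / ξ ^ (2 / (p + 1)) < α + η ∧
      α - η < (1 - profile p (α - κ) ξ) / ξ ^ (2 / (p + 1)) := by
    filter_upwards [hA.eventually_lt hlo (by linarith), hup.eventually_lt hA (by linarith),
      hlo.eventually_lt_const (show α + κ < α + η by linarith),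
      hup.eventually_const_lt (show α - η < α - κ by linarith), self_mem_nhdsWithin]
      with ξ h1 h2 h3 h4 hξ
    have hpos : 0 < ξ ^ (2 / (p + 1)) := rpow_pos_of_pos hξ _
    rw [div_lt_div_iff_of_pos_right hpos] at h1 h2
    exact ⟨by linarith, by linarith, h3, h4⟩
  obtain ⟨lam, hlam, hsub⟩ := mem_nhdsGT_iff_exists_Ioc_subset.1 hev
  have hlam0 : (0 : ℝ) < lam := hlam
  have hmass0 : ftEven f₀ 0 = 1 := by simpa [ftEven] using hf₀_mass
  have hprof0 : ∀ k, profile p k 0 = 1 := fun k => by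
    simp [profile, zero_rpow (show 2 / (p + 1) ≠ 0 by positivity)]
  refine ⟨lam, hlam0, fun ε hε t ht ξ hξ hξl => ?_⟩
  have hinit : ∀ ζ, ftEven (fun v => fε ε v 0) ζ = ftEven f₀ ζ := fun ζ => by
    simp only [hfε_init ε hε]
  have hmass : ∀ t ∈ Ici (0 : ℝ), ftEven (fun v => fε ε v t) 0 = 1 := by
    refine mass_eq_one (σ := 2 * ∫ θ in (0 : ℝ)..(π / 2), b ε θ)
      (by rw [hinit, hmass0]) fun t ht => ?_
    refine (hfε_eq ε hε 0 t ht).congr_deriv ?_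
    simp only [zero_mul, intervalIntegral.integral_mul_const, mul_assoc]
  have hsol : KacSolution p (b ε) (fun ξ t => ftEven (fun v => fε ε v t) ξ) :=
    { ker_int := by
        rw [intervalIntegrable_iff_integrableOn_Icc_of_le (by positivity)]
        exact (hb_int ε hε).mono_set (Icc_subset_Icc_left (by linarith [pi_pos]))
      ker_nonneg := hb_nonneg ε hε
      cont := fun t ht => continuous_ftEven (hfε_int ε hε t ht)
      bound := fun t ht ξ => (abs_ftEven_le (hfε_int ε hε t ht)
        (fun v => hfε_nonneg ε hε v t ht) ξ).trans (hmass t ht).le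
      eqn := hfε_eq ε hε }
  have hcase : ∀ ζ ∈ Icc 0 lam, profile p (α + κ) ζ ≤ ftEven f₀ ζ ∧
      ftEven f₀ ζ ≤ profile p (α - κ) ζ := by
    intro ζ hζ
    rcases hζ.1.eq_or_lt with rfl | h
    · simp [hprof0, hmass0]
    · exact ⟨(hsub ⟨h, hζ.2⟩).1, (hsub ⟨h, hζ.2⟩).2.1⟩
  have hlower := hsol.lower_barrier (lam := lam) hp (show 0 ≤ α + κ by positivity)
    (fun ζ hζ => (hcase ζ hζ).1.trans_eq (hinit ζ).symm)
  have hupper := hsol.upper_barrier (lam := lam) hp (show 0 ≤ α - κ by linarith)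
    (fun ζ hζ t ht => (profile_nonneg _ _ _).trans (hlower ζ hζ t ht))
    (fun ζ hζ => (hinit ζ).trans_le (hcase ζ hζ).2)
  have h1 := hlower ξ ⟨hξ.le, hξl.le⟩ t ht
  have h2 := hupper ξ ⟨hξ.le, hξl.le⟩ t ht
  obtain ⟨-, -, h3, h4⟩ := hsub ⟨hξ, hξl.le⟩
  have hpos : 0 < ξ ^ (2 / (p + 1)) := rpow_pos_of_pos hξ _
  rw [div_lt_iff₀ hpos] at h3
  rw [lt_div_iff₀ hpos] at h4
  rw [abs_sub_lt_iff, sub_lt_iff_lt_add, sub_lt_comm, div_lt_iff₀ hpos, lt_div_iff₀ hpos]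
  constructor <;> linarith

end
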